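/- arXiv:2002.05059 — 2 statements merged into one kernel-verified Lean document; each statement's English description precedes it below -/
import Mathlib

section
/- Single-layer invertibility: let W be an m×m real matrix, b ∈ ℝ^m, and let A be the unbiased Lorentzian Goldilocks activation A(t) = t + t/(π(1+t²)). The Goldilocks layer map L : ℝ^m → ℝ^m, L(x)_i = A((Wx + b)_i), is a bijection of ℝ^m if and only if W is invertible (has full rank). -/
open Real

/-- The unbiased Lorentzian Goldilocks activation. -/
noncomputable def goldilocksA : ℝ → ℝ := fun t => t + t / (π * (1 + t ^ 2))

/-- The Goldilocks layer map `L(x)ᵢ = A((Wx + b)ᵢ)` applies the activation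
componentwise to an affine map. -/
noncomputable def goldilocksLayer {m : ℕ} (W : Matrix (Fin m) (Fin m) ℝ)
    (b : Fin m → ℝ) (x : Fin m → ℝ) : Fin m → ℝ :=
  fun i => goldilocksA ((W.mulVec x + b) i)

theorem goldA_strictMono : StrictMono goldilocksA := by
  intro s t hst
  have hp : 0 < π := Real.pi_pos
  have hp1 : 1 < π := by linarith [Real.pi_gt_three]
  have hs : 0 < 1 + s ^ 2 := by positivity
  have ht : 0 < 1 + t ^ 2 := by positivity
  have key : goldilocksA t - goldilocksA s =
      (t - s) * ((π * ((1 + s ^ 2) * (1 + t ^ 2)) + (1 - s * t)) /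
        (π * ((1 + s ^ 2) * (1 + t ^ 2)))) := by
    unfold goldilocksA
    field_simp
    ring
  have h1 : 0 < (1 + s ^ 2) * (1 + t ^ 2) + (1 - s * t) := by
    nlinarith [sq_nonneg (s - t), sq_nonneg (s * t), sq_nonneg s, sq_nonneg t]
  have h2 : (1 + s ^ 2) * (1 + t ^ 2) ≤ π * ((1 + s ^ 2) * (1 + t ^ 2)) :=
    le_mul_of_one_le_left (by positivity) hp1.le
  have h3 : 0 < goldilocksA t - goldilocksA s := by
    rw [key]
    exact mul_pos (by linarith) (div_pos (by linarith) (by positivity))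
  linarith

theorem goldA_abs (t : ℝ) : |t / (π * (1 + t ^ 2))| ≤ 1 := by
  have hp1 : 1 < π := by linarith [Real.pi_gt_three]
  have h2 : (1 + t ^ 2) ≤ π * (1 + t ^ 2) :=
    le_mul_of_one_le_left (by positivity) hp1.le
  have h : 0 < π * (1 + t ^ 2) := by positivity
  rw [abs_le, le_div_iff₀ h, div_le_iff₀ h]
  constructor <;> nlinarith [sq_nonneg (t - 1), sq_nonneg (t + 1)]

theorem goldA_bijective : Function.Bijective goldilocksA := by
  refine ⟨goldA_strictMono.injective, ?_⟩
  have hc : Continuous goldilocksA := by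
    unfold goldilocksA
    refine continuous_id.add (continuous_id.div (by fun_prop) ?_)
    intro t
    have := Real.pi_pos
    positivity
  refine hc.surjective ?_ ?_
  · refine Filter.tendsto_atTop_mono (f := fun t : ℝ => t + (-1)) ?_
      (Filter.tendsto_atTop_add_const_right _ _ Filter.tendsto_id)
    intro t
    have := (abs_le.1 (goldA_abs t)).1
    unfold goldilocksA
    linarith
  · refine Filter.tendsto_atBot_mono (f := fun t : ℝ => t + 1) ?_
      (Filter.tendsto_atBot_add_const_right _ _ Filter.tendsto_id)
    intro t
    have := (abs_le.1 (goldA_abs t)).2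
    unfold goldilocksA
    linarith

/-- Single-layer invertibility: the Goldilocks layer map is a bijection of `ℝᵐ`
if and only if the weight matrix `W` is invertible. -/
theorem goldilocks_layer_bijective_iff {m : ℕ} (W : Matrix (Fin m) (Fin m) ℝ)
    (b : Fin m → ℝ) :
    Function.Bijective (goldilocksLayer W b) ↔ IsUnit W := by
  constructor
  · intro h
    rw [← Matrix.mulVec_injective_iff_isUnit]
    intro x y hxy
    apply h.1
    unfold goldilocksLayer
    have hxy' : W.mulVec x = W.mulVec y := hxy
    rw [hxy']
  · intro h
    refine ⟨?_, ?_⟩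
    · intro x y hxy
      apply Matrix.mulVec_injective_iff_isUnit.2 h
      funext i
      have := goldA_bijective.1 (congrFun hxy i)
      simpa using this
    · intro y
      choose g hg using goldA_bijective.2
      obtain ⟨x, hx⟩ := Matrix.mulVec_surjective_iff_isUnit.2 h (fun i => g (y i) - b i)
      refine ⟨x, ?_⟩
      funext i
      unfold goldilocksLayer
      have hx' : W.mulVec x = fun i => g (y i) - b i := hx
      rw [hx']
      simp [hg]
end

section
/- Equivalence of the direct and interpretable formulations: let W_0, …, W_N be invertible m×m real matrices, b_0, …, b_N ∈ ℝ^m, and g : ℝ → ℝ any function applied componentwise to vectors. Define V_0 = W_0, V_n = W_n·V_{n−1}; c_0 = b_0, c_n = W_n·c_{n−1} + b_n. Suppose the sequence x_0, x_1, …, x_{N+1} ∈ ℝ^m satisfies the direct feed-forward recursion x_{n+1} = W_n x_n + b_n + g(W_n x_n + b_n), and set y_0 = x_0 and y_n = V_{n−1}^{−1}(x_n − c_{n−1}) for n ≥ 1. Then the sequence y_n satisfies the interpretable recursion y_{n+1} = y_n + V_n^{−1} g(V_n y_n + c_n) for all n = 0, …, N. -/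
/-- Equivalence of the direct and interpretable formulations of a Goldilocks network:
if `x` satisfies the direct recursion `x_{n+1} = W_n x_n + b_n + g(W_n x_n + b_n)`
(componentwise `g`), `V_n = W_n ⋯ W_0`, `c_n = W_n c_{n−1} + b_n` with `c_0 = b_0`,
and `y_0 = x_0`, `y_n = V_{n−1}⁻¹ (x_n − c_{n−1})` for `n ≥ 1`, then `y` satisfies the
interpretable recursion `y_{n+1} = y_n + V_n⁻¹ g(V_n y_n + c_n)` for all `n ≤ N`. -/
theorem goldilocks_direct_interpretable_equiv {m : ℕ} (N : ℕ)
    (W : ℕ → Matrix (Fin m) (Fin m) ℝ) (b : ℕ → Fin m → ℝ)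
    (hW : ∀ n ≤ N, IsUnit (W n))
    (g : ℝ → ℝ)
    (V : ℕ → Matrix (Fin m) (Fin m) ℝ)
    (hV0 : V 0 = W 0)
    (hV : ∀ n, V (n + 1) = W (n + 1) * V n)
    (c : ℕ → Fin m → ℝ)
    (hc0 : c 0 = b 0)
    (hc : ∀ n, c (n + 1) = (W (n + 1)).mulVec (c n) + b (n + 1))
    (x : ℕ → Fin m → ℝ)
    (hx : ∀ n ≤ N, x (n + 1) =
      (W n).mulVec (x n) + b n + fun i => g (((W n).mulVec (x n) + b n) i))
    (y : ℕ → Fin m → ℝ)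
    (hy0 : y 0 = x 0)
    (hy : ∀ n, y (n + 1) = (V n)⁻¹.mulVec (x (n + 1) - c n)) :
    ∀ n ≤ N, y (n + 1) = y n + (V n)⁻¹.mulVec
      (fun i => g (((V n).mulVec (y n) + c n) i)) := by
  have hVu : ∀ n ≤ N, IsUnit (V n) := by
    intro n
    induction n with
    | zero => intro h; rw [hV0]; exact hW 0 h
    | succ k ih => intro h; rw [hV]; exact (hW _ h).mul (ih (by omega))
  have key : ∀ n ≤ N, (W n).mulVec (x n) + b n = (V n).mulVec (y n) + c n := by
    intro n hn
    cases n with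
    | zero => rw [hV0, hc0, hy0]
    | succ k =>
      have hu := (Matrix.isUnit_iff_isUnit_det _).1 (hVu k (by omega))
      rw [hV, hc, hy, Matrix.mulVec_mulVec, Matrix.mul_assoc, Matrix.mul_nonsing_inv _ hu,
        Matrix.mul_one, Matrix.mulVec_sub]
      abel
  intro n hn
  have hu := (Matrix.isUnit_iff_isUnit_det _).1 (hVu n hn)
  rw [hy, hx n hn, key n hn, add_right_comm, add_sub_cancel_right, Matrix.mulVec_add,
    Matrix.mulVec_mulVec, Matrix.nonsing_inv_mul _ hu, Matrix.one_mulVec]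
end
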